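/- Let X = {x ∈ ℝ^n : ⟨a_i, x⟩ + b_i = 0 for i ∈ E, ω_i(x) ≤ 0 for i ∈ I} be nonempty, where E and I are finite index sets, a_i ∈ ℝ^n, b_i ∈ ℝ, and each ω_i : ℝ^n → ℝ is convex and continuously differentiable. Let g, h : ℝ^n → ℝ and G_1,…,G_K, H_1,…,H_K : ℝ^n → ℝ be convex with g ρ-strongly convex (ρ ≥ 0), let f = g − h, and let β ≥ 0 with ρ + β > 0. Assume the generalized MFCQ: for every x ∈ X with G_i(x) ≤ H_i(x) for all i ∈ {1,…,K}, there exists y ∈ X such that ⟨∇ω_i(x), y − x⟩ < 0 for every i ∈ I with ω_i(x) = 0, and, for every i ∈ {1,…,K} with G_i(x) = H_i(x), G_i(y) − H_i(x) − ⟨s_{H_i}, y − x⟩ < 0 for every s_{H_i} ∈ ∂H_i(x). Let x^0 ∈ X satisfy G_i(x^0) ≤ H_i(x^0) for all i, assume the level set {x ∈ X : G_i(x) ≤ H_i(x) for all i, f(x) ≤ f(x^0)} is bounded, and suppose that for each k ≥ 0 there are s_h^k ∈ ∂h(x^k) and s_{H_i}^k ∈ ∂H_i(x^k) for each i such that x^{k+1}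 minimizes u ↦ g(u) − ⟨s_h^k, u − x^k⟩ + (β/2)‖u − x^k‖² over {u ∈ X : G_i(u) − H_i(x^k) − ⟨s_{H_i}^k, u − x^k⟩ ≤ 0 for all i ∈ {1,…,K}}. Then every accumulation point x* of (x^k) is a KKT point of min{g(x) − h(x) : x ∈ X, G_i(x) − H_i(x) ≤ 0 for i = 1,…,K}: x* ∈ X, G_i(x*) ≤ H_i(x*) for all i, and there exist λ_1,…,λ_K ≥ 0 with λ_i(G_i(x*) − H_i(x*)) = 0 for all i and 0 ∈ ∂g(x*) − ∂h(x*) + Σ_{i=1}^K λ_i(∂G_i(x*) − ∂H_i(x*)) + N_X(x*). -/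

import Mathlib

/-! The argument passes to the limit in the convex subproblems and derives the KKT conditions once, at
the limiting subproblem, so no bound on the multipliers of the subproblems is needed.

Strong convexity of the subproblem objectives gives `sufficient_decrease`: `g - h` drops by a
multiple of `‖x (k + 1) - x k‖ ^ 2` at every step, and the linearized constraints keep all iterates
feasible. The values of `g - h` are monotone and converge along the given subsequence, hence
converge, and the steps tend to zero. The subgradients of `h` and `H i` along the subsequence are
bounded (`exists_bound_subdiff`), so a further subsequence converges to subgradients at the limit
point (`mem_subdiff_of_tendsto`).

The constraint qualification, applied to these limiting subgradients, gives a Slater point of the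
limiting subproblem (`exists_slater`). Strictly feasible points of the limiting subproblem are
feasible for late subproblems; optimality therefore passes to the limit there, and then to all
feasible points (`le_of_le_strict`). The proximal term drops out because it is centred at the
minimizer (`min_of_prox_min`).

What remains is convex duality: Lagrange multipliers under Slater's condition
(`exists_lagrange_multipliers`) and the subdifferential sum rule (`exists_subgradient_sum`), both
consequences of the Hahn-Banach separation theorem, give the inclusion with the normal cone
(`exists_kkt`).
-/

open scoped RealInnerProductSpace BigOperators
open Filter

/-- The convex subdifferential of `φ : ℝ^n → ℝ` at `x`. -/
def subdiff {n : ℕ} (φ : EuclideanSpace ℝ (Fin n) → ℝ) (x : EuclideanSpace ℝ (Fin n)) :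
    Set (EuclideanSpace ℝ (Fin n)) :=
  {s | ∀ y, φ x + ⟪s, y - x⟫ ≤ φ y}

/-- The normal cone of the convex set `X` at `x`. -/
def normalCone {n : ℕ} (X : Set (EuclideanSpace ℝ (Fin n))) (x : EuclideanSpace ℝ (Fin n)) :
    Set (EuclideanSpace ℝ (Fin n)) :=
  {v | ∀ y ∈ X, ⟪v, y - x⟫ ≤ 0}

/-! ### Subdifferential calculus and Lagrange duality -/

/-- Two-term subdifferential sum rule with a constraint set. The strict epigraph of `p` is open and
convex and misses the convex set `{(u, r) : u ∈ X, r ≤ p z + q z - q u}`; a separating hyperplane is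
not vertical because both sets meet the line above `z`, and its slope is the subgradient. -/
lemma exists_subgradient_split {n : ℕ} {X : Set (EuclideanSpace ℝ (Fin n))}
    {p q : EuclideanSpace ℝ (Fin n) → ℝ}
    (hp : ConvexOn ℝ Set.univ p) (hq : ConvexOn ℝ X q) {z : EuclideanSpace ℝ (Fin n)} (hz : z ∈ X)
    (hmin : ∀ u ∈ X, p z + q z ≤ p u + q u) :
    ∃ s ∈ subdiff p z, ∀ u ∈ X, q z - ⟪s, u - z⟫ ≤ q u := by
  have hpc : Continuous p := hp.locallyLipschitz.continuous
  have hA : Convex ℝ {a : EuclideanSpace ℝ (Fin n) × ℝ | p a.1 < a.2} := by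
    simpa using hp.convex_strict_epigraph
  have hAo : IsOpen {a : EuclideanSpace ℝ (Fin n) × ℝ | p a.1 < a.2} :=
    isOpen_lt (by fun_prop) (by fun_prop)
  have hB : Convex ℝ {a : EuclideanSpace ℝ (Fin n) × ℝ | a.1 ∈ X ∧ a.2 ≤ (p z + q z) - q a.1} := by
    have := ((concaveOn_const (p z + q z) hq.1).sub hq).convex_hypograph
    simpa using this
  obtain ⟨f, c, hfA, hfB⟩ := geometric_hahn_banach_open hA hAo hB (by
    rw [Set.disjoint_left]
    rintro ⟨u, r⟩ h1 ⟨h2, h3⟩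
    have := hmin u h2
    simp only [Set.mem_ofPred_eq] at h1 h3
    linarith)
  set l : EuclideanSpace ℝ (Fin n) →L[ℝ] ℝ := f.comp (ContinuousLinearMap.inl ℝ _ _) with hl
  set α : ℝ := f (0, 1) with hα
  have hf : ∀ u r, f (u, r) = l u + α * r := by
    intro u r
    have : ((u, r) : EuclideanSpace ℝ (Fin n) × ℝ) = (u, 0) + r • (0, 1) := by simp
    rw [this, map_add, map_smul]
    simp [hl, hα, mul_comm]
  have hA' : ∀ u r, p u < r → l u + α * r < c := fun u r h => by rw [← hf]; exact hfA _ h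
  have hB' : ∀ u ∈ X, c ≤ l u + α * (p z + q z - q u) := fun u h => by
    rw [← hf]; exact hfB _ ⟨h, le_rfl⟩
  have hA'' : ∀ u, l u + α * p u ≤ c := by
    intro u
    have ht : Tendsto (fun r => l u + α * r) (nhdsWithin (p u) (Set.Ioi (p u)))
        (nhds (l u + α * p u)) :=
      ((by fun_prop : Continuous fun r => l u + α * r).tendsto _).mono_left nhdsWithin_le_nhds
    exact le_of_tendsto ht (by
      filter_upwards [self_mem_nhdsWithin] with r hr using (hA' u r hr).le)
  have hα0 : α < 0 := by
    have h1 := hA' z (p z + 1) (by linarith)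
    have h2 := hB' z hz
    nlinarith
  have hs : ∀ u, ⟪(-α)⁻¹ • (InnerProductSpace.toDual ℝ _).symm l, u⟫ = (-α)⁻¹ * l u := by
    intro u
    rw [real_inner_smul_left, InnerProductSpace.toDual_symm_apply]
  refine ⟨(-α)⁻¹ • (InnerProductSpace.toDual ℝ _).symm l, ?_, ?_⟩
  · intro u
    have h1 := hA'' u
    have h2 := hB' z hz
    rw [hs, map_sub]
    have h3 : (-α)⁻¹ * (l u - l z) ≤ p u - p z := by
      rw [inv_mul_le_iff₀ (by linarith)]
      linarith
    linarith
  · intro u hu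
    have h1 := hA'' z
    have h2 := hB' u hu
    rw [hs, map_sub]
    have h3 : q z - q u ≤ (-α)⁻¹ * (l u - l z) := by
      rw [le_inv_mul_iff₀ (by linarith)]
      linarith
    linarith

lemma subdiff_nonempty {n : ℕ} {p : EuclideanSpace ℝ (Fin n) → ℝ} (hp : ConvexOn ℝ Set.univ p)
    (z : EuclideanSpace ℝ (Fin n)) : (subdiff p z).Nonempty := by
  obtain ⟨s, hs, -⟩ := exists_subgradient_split (X := {z}) (q := fun _ => 0) hp
    (convexOn_const 0 (convex_singleton z)) rfl (by simp)
  exact ⟨s, hs⟩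

/-- The split survives a weight `lam ≥ 0` on the first term. At weight `0` the subgradient is
arbitrary, so its existence is needed separately. -/
lemma exists_subgradient_split_weighted {n : ℕ} {X : Set (EuclideanSpace ℝ (Fin n))}
    {p q : EuclideanSpace ℝ (Fin n) → ℝ}
    (hp : ConvexOn ℝ Set.univ p) (hq : ConvexOn ℝ X q) {z : EuclideanSpace ℝ (Fin n)} (hz : z ∈ X)
    {lam : ℝ} (hlam : 0 ≤ lam) (hmin : ∀ u ∈ X, lam * p z + q z ≤ lam * p u + q u) :
    ∃ s ∈ subdiff p z, ∀ u ∈ X, q z - lam * ⟪s, u - z⟫ ≤ q u := by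
  rcases hlam.eq_or_lt with rfl | hpos
  · obtain ⟨s, hs⟩ := subdiff_nonempty hp z
    exact ⟨s, hs, fun u hu => by simpa using hmin u hu⟩
  · obtain ⟨s, hs, hs'⟩ := exists_subgradient_split (q := fun u => lam⁻¹ * q u) hp
      (hq.smul (inv_nonneg.2 hlam)) hz (by
        intro u hu
        have := mul_le_mul_of_nonneg_left (hmin u hu) (inv_nonneg.2 hlam)
        simpa [mul_add, inv_mul_cancel_left₀ hpos.ne'] using this)
    refine ⟨s, hs, fun u hu => ?_⟩
    have := mul_le_mul_of_nonneg_left (hs' u hu) hlam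
    simpa [mul_sub, mul_inv_cancel_left₀ hpos.ne'] using this

/-- Subdifferential sum rule for a weighted finite sum plus a linear form, minimized over `X`. The
linear form `w` absorbs the subgradients already extracted in the induction. -/
lemma exists_subgradient_sum {n : ℕ} {ι : Type*} {X : Set (EuclideanSpace ℝ (Fin n))}
    (hX : Convex ℝ X) {c : ι → EuclideanSpace ℝ (Fin n) → ℝ}
    (hc : ∀ i, ConvexOn ℝ Set.univ (c i)) {z : EuclideanSpace ℝ (Fin n)} (hz : z ∈ X)
    {lam : ι → ℝ} (hlam : ∀ i, 0 ≤ lam i) (S : Finset ι) :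
    ∀ w : EuclideanSpace ℝ (Fin n),
      (∀ u ∈ X, ⟪w, z⟫ + ∑ i ∈ S, lam i * c i z ≤ ⟪w, u⟫ + ∑ i ∈ S, lam i * c i u) →
      ∃ s : ι → EuclideanSpace ℝ (Fin n), (∀ i, s i ∈ subdiff (c i) z) ∧
        ∀ u ∈ X, 0 ≤ ⟪w + ∑ i ∈ S, lam i • s i, u - z⟫ := by
  classical
  induction S using Finset.induction_on with
  | empty =>
    intro w hw
    choose s hs using fun i => subdiff_nonempty (hc i) z
    refine ⟨s, hs, fun u hu => ?_⟩
    have := hw u hu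
    simp only [Finset.sum_empty, add_zero] at this ⊢
    rw [inner_sub_right]
    linarith
  | insert j S hj ih =>
    intro w hw
    have hq : ConvexOn ℝ X (fun u => ⟪w, u⟫ + ∑ i ∈ S, lam i * c i u) := by
      refine ((innerSL ℝ w).toLinearMap.convexOn hX).add ?_
      clear ih hw hj
      induction S using Finset.induction_on with
      | empty => simpa using convexOn_const (0 : ℝ) hX
      | insert k T hk ihT =>
        simp only [Finset.sum_insert hk]
        exact (((hc k).subset (Set.subset_univ _) hX).smul (hlam k)).add ihT
    obtain ⟨s, hs, hs'⟩ := exists_subgradient_split_weighted (hc j) hq hz (hlam j) (by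
      intro u hu
      have := hw u hu
      simp only [Finset.sum_insert hj] at this
      linarith)
    obtain ⟨t, ht, ht'⟩ := ih (w + lam j • s) (by
      intro u hu
      have := hs' u hu
      simp only [inner_add_left, real_inner_smul_left, inner_sub_right] at this ⊢
      linarith)
    refine ⟨Function.update t j s, fun i => ?_, fun u hu => ?_⟩
    · rcases eq_or_ne i j with rfl | hij
      · simpa using hs
      · simpa [hij] using ht i
    · have h1 : ∑ i ∈ S, lam i • Function.update t j s i = ∑ i ∈ S, lam i • t i :=
        Finset.sum_congr rfl fun i hi => by
          rw [Function.update_of_ne (by rintro rfl; exact hj hi)]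
      rw [Finset.sum_insert hj, h1, Function.update_self, ← add_assoc]
      exact ht' u hu

/-- Lagrange multipliers for a convex program under Slater's condition. The achievable upper bounds
`{(r, v) : φ u - φ z < r, c i u < v i for some u ∈ X}` form an open convex set missing the origin;
the Slater point `y` keeps the hyperplane through the origin from being vertical. -/
lemma exists_lagrange_multipliers {V : Type*} [AddCommGroup V] [Module ℝ V] {K : ℕ} {X : Set V}
    {φ : V → ℝ} {c : Fin K → V → ℝ} (hφ : ConvexOn ℝ X φ) (hc : ∀ i, ConvexOn ℝ X (c i))
    {z : V} (hz : z ∈ X) (hcz : ∀ i, c i z ≤ 0)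
    (hmin : ∀ u ∈ X, (∀ i, c i u ≤ 0) → φ z ≤ φ u) {y : V} (hy : y ∈ X) (hcy : ∀ i, c i y < 0) :
    ∃ lam : Fin K → ℝ, (∀ i, 0 ≤ lam i) ∧ (∀ i, lam i * c i z = 0) ∧
      ∀ u ∈ X, φ z ≤ φ u + ∑ i, lam i * c i u := by
  set A : Set (ℝ × (Fin K → ℝ)) :=
    ⋃ u ∈ X, {a | φ u - φ z < a.1 ∧ ∀ i, c i u < a.2 i} with hAdef
  have hAo : IsOpen A := by
    refine isOpen_biUnion fun u _ => ?_
    have : {a : ℝ × (Fin K → ℝ) | φ u - φ z < a.1 ∧ ∀ i, c i u < a.2 i} =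
        {a | φ u - φ z < a.1} ∩ ⋂ i, {a | c i u < a.2 i} := by ext; simp
    rw [this]
    exact (isOpen_lt (by fun_prop) (by fun_prop)).inter
      (isOpen_iInter_of_finite fun i => isOpen_lt (by fun_prop) (by fun_prop))
  have hA : Convex ℝ A := by
    intro a ha a' ha' s t hs ht hst
    simp only [hAdef, Set.mem_iUnion, Set.mem_ofPred_eq, exists_prop] at ha ha' ⊢
    obtain ⟨u, hu, hu1, hu2⟩ := ha
    obtain ⟨u', hu', hu1', hu2'⟩ := ha'
    have key : ∀ {p q p' q' : ℝ}, p < q → p' < q' → s * p + t * p' < s * q + t * q' := by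
      intro p q p' q' h h'
      rcases hs.eq_or_lt with rfl | hs
      · have : t = 1 := by linarith
        subst this; linarith
      · nlinarith [mul_lt_mul_of_pos_left h hs, mul_le_mul_of_nonneg_left h'.le ht]
    refine ⟨s • u + t • u', hφ.1 hu hu' hs ht hst, ?_, fun i => ?_⟩
    · have h1 := hφ.2 hu hu' hs ht hst
      have h2 := key hu1 hu1'
      have h3 : s * φ z + t * φ z = φ z := by rw [← add_mul, hst, one_mul]
      simp only [smul_eq_mul, Prod.fst_add, Prod.smul_fst] at h1 ⊢
      linarith
    · have h1 := (hc i).2 hu hu' hs ht hst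
      have h2 := key (hu2 i) (hu2' i)
      simp only [smul_eq_mul, Prod.snd_add, Prod.smul_snd, Pi.add_apply, Pi.smul_apply] at h1 ⊢
      linarith
  obtain ⟨f, hf⟩ := geometric_hahn_banach_open_point hA hAo (x := 0) (by
    simp only [hAdef, Set.mem_iUnion, Set.mem_ofPred_eq, exists_prop, not_exists, not_and]
    intro u hu h1 h2
    have := hmin u hu fun i => (h2 i).le
    simp only [Prod.fst_zero] at h1
    linarith)
  set α : ℝ := f (1, 0) with hα
  set μ : Fin K → ℝ := fun i => f (0, fun j => if i = j then 1 else 0) with hμ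
  have hfe : ∀ r v, f (r, v) = α * r + ∑ i, μ i * v i := by
    intro r v
    have h1 : ((r, v) : ℝ × (Fin K → ℝ)) = r • (1, 0) + (0, v) := by simp
    have h2 : f (0, v) = ∑ i, μ i * v i := by
      have := LinearMap.pi_apply_eq_sum_univ
        (f.comp (ContinuousLinearMap.inr ℝ ℝ (Fin K → ℝ))).toLinearMap v
      simpa [hμ, mul_comm] using this
    rw [h1, map_add, map_smul, h2, smul_eq_mul, mul_comm]
  have key : ∀ u ∈ X, ∀ (r : ℝ) (v : Fin K → ℝ), φ u - φ z < r → (∀ i, c i u < v i) → α * r + ∑ i, μ i * v i < 0 := by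
    intro u hu r v h1 h2
    rw [← hfe]
    have := hf (r, v) (by
      simp only [hAdef, Set.mem_iUnion, Set.mem_ofPred_eq, exists_prop]
      exact ⟨u, hu, h1, h2⟩)
    simpa using this
  have hμ0 : ∀ i, μ i ≤ 0 := by
    intro i
    by_contra! hpos
    set C := α + ∑ j, μ j with hC
    have h1 := key z hz 1 (fun j => 1 + (|C| / μ i) * if j = i then 1 else 0) (by simp) (by
      intro j
      have := hcz j
      have : 0 ≤ (|C| / μ i) * if j = i then (1 : ℝ) else 0 := by positivity
      linarith)
    simp only [mul_add, Finset.sum_add_distrib, mul_one, mul_ite, mul_zero,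
      Finset.sum_ite_eq', Finset.mem_univ, if_true] at h1
    rw [mul_div_cancel₀ _ hpos.ne'] at h1
    linarith [neg_abs_le C]
  have hα0 : α < 0 := by
    -- Test at the Slater point with `v = c y / 2`, where every term `μ i * v i` is nonnegative.
    have h1 := key y hy (|φ y - φ z| + 1) (fun i => c i y / 2)
      (by linarith [le_abs_self (φ y - φ z)]) (fun i => by linarith [hcy i])
    have h2 : 0 ≤ ∑ i, μ i * (c i y / 2) := Finset.sum_nonneg fun i _ =>
      mul_nonneg_of_nonpos_of_nonpos (hμ0 i) (by linarith [hcy i])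
    by_contra! h
    have : 0 ≤ α * (|φ y - φ z| + 1) := by positivity
    linarith
  have hle : ∀ u ∈ X, α * (φ u - φ z) + ∑ i, μ i * c i u ≤ 0 := by
    intro u hu
    have ht : Tendsto (fun ε : ℝ => α * (φ u - φ z + ε) + ∑ i, μ i * (c i u + ε))
        (nhdsWithin 0 (Set.Ioi 0)) (nhds (α * (φ u - φ z + 0) + ∑ i, μ i * (c i u + 0))) :=
      ((by fun_prop : Continuous fun ε : ℝ =>
        α * (φ u - φ z + ε) + ∑ i, μ i * (c i u + ε)).tendsto 0).mono_left nhdsWithin_le_nhds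
    simp only [add_zero] at ht
    refine le_of_tendsto ht ?_
    filter_upwards [self_mem_nhdsWithin] with ε hε
    exact (key u hu _ _ (lt_add_of_pos_right _ hε) fun i => lt_add_of_pos_right _ hε).le
  have hlam : ∀ i, 0 ≤ μ i / α := fun i => div_nonneg_of_nonpos (hμ0 i) hα0.le
  have hfin : ∀ u ∈ X, φ z ≤ φ u + ∑ i, μ i / α * c i u := by
    intro u hu
    have h1 := hle u hu
    have h2 : α * ∑ i, μ i / α * c i u = ∑ i, μ i * c i u := by
      rw [Finset.mul_sum]
      exact Finset.sum_congr rfl fun i _ => by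
        rw [← mul_assoc, mul_div_cancel₀ _ hα0.ne]
    rw [← h2] at h1
    nlinarith
  refine ⟨fun i => μ i / α, hlam, fun i => ?_, hfin⟩
  have hnp : ∀ i ∈ Finset.univ, μ i / α * c i z ≤ 0 := fun i _ =>
    mul_nonpos_of_nonneg_of_nonpos (hlam i) (hcz i)
  have h0 : ∑ i, μ i / α * c i z = 0 :=
    le_antisymm (Finset.sum_nonpos hnp) (by linarith [hfin z hz])
  exact (Finset.sum_eq_zero_iff_of_nonpos hnp).1 h0 i (Finset.mem_univ i)

/-! ### Optimality in the limiting subproblem -/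

/-- Subgradients of a finite convex function are uniformly bounded over bounded sets of base
points: a step of length one along the subgradient raises the function by the subgradient's norm. -/
lemma exists_bound_subdiff {n : ℕ} {p : EuclideanSpace ℝ (Fin n) → ℝ}
    (hp : ConvexOn ℝ Set.univ p) (R : ℝ) :
    ∃ M, 0 ≤ M ∧ ∀ x, ‖x‖ ≤ R → ∀ s ∈ subdiff p x, ‖s‖ ≤ M := by
  have hpc : Continuous p := hp.locallyLipschitz.continuous
  obtain ⟨C, hC⟩ := (isCompact_closedBall (0 : EuclideanSpace ℝ (Fin n))
    (R + 1)).exists_bound_of_continuousOn hpc.continuousOn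
  refine ⟨max 0 (2 * C), le_max_left _ _, fun x hx s hs => ?_⟩
  rcases eq_or_ne s 0 with rfl | hs0
  · simp
  have hsn : 0 < ‖s‖ := norm_pos_iff.2 hs0
  have hunit : ‖(‖s‖)⁻¹ • s‖ = 1 := by
    rw [norm_smul, norm_inv, norm_norm, inv_mul_cancel₀ hsn.ne']
  have h1 := hs (x + (‖s‖)⁻¹ • s)
  rw [add_sub_cancel_left, real_inner_smul_right, real_inner_self_eq_norm_sq, sq,
    inv_mul_cancel_left₀ hsn.ne'] at h1
  have h2 := hC x (by simp; linarith)
  have h3 := hC (x + (‖s‖)⁻¹ • s) (by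
    have := norm_add_le x ((‖s‖)⁻¹ • s)
    rw [mem_closedBall_zero_iff]
    linarith)
  rw [Real.norm_eq_abs, abs_le] at h2 h3
  exact le_max_of_le_right (by linarith)

/-- The graph of the subdifferential of a continuous function is closed. -/
lemma mem_subdiff_of_tendsto {n : ℕ} {p : EuclideanSpace ℝ (Fin n) → ℝ} (hp : Continuous p)
    {x s : ℕ → EuclideanSpace ℝ (Fin n)} {z t : EuclideanSpace ℝ (Fin n)}
    (hx : Tendsto x atTop (nhds z)) (hs : Tendsto s atTop (nhds t))
    (hmem : ∀ k, s k ∈ subdiff p (x k)) : t ∈ subdiff p z := by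
  intro y
  have h : Tendsto (fun k => p (x k) + ⟪s k, y - x k⟫) atTop (nhds (p z + ⟪t, y - z⟫)) :=
    ((hp.tendsto z).comp hx).add (hs.inner (tendsto_const_nhds.sub hx))
  exact le_of_tendsto' h fun k => hmem k y

/-- The midpoint inequality for a `ρ`-strongly convex function, by the parallelogram law. -/
lemma midpoint_strong {n : ℕ} {g : EuclideanSpace ℝ (Fin n) → ℝ} {ρ : ℝ}
    (hg : ConvexOn ℝ Set.univ (fun y => g y - ρ / 2 * ‖y‖ ^ 2)) (u v : EuclideanSpace ℝ (Fin n)) :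
    g ((1 / 2 : ℝ) • u + (1 / 2 : ℝ) • v) ≤ (g u + g v) / 2 - ρ / 8 * ‖u - v‖ ^ 2 := by
  have h := hg.2 (Set.mem_univ u) (Set.mem_univ v) (by norm_num : (0 : ℝ) ≤ 1 / 2)
    (by norm_num : (0 : ℝ) ≤ 1 / 2) (by norm_num)
  simp only [smul_eq_mul] at h
  rw [← smul_add, norm_smul, mul_pow] at h
  have h3 : ‖u + v‖ ^ 2 = 2 * ‖u‖ ^ 2 + 2 * ‖v‖ ^ 2 - ‖u - v‖ ^ 2 := by
    rw [norm_add_sq_real, norm_sub_sq_real]; ring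
  rw [h3] at h
  rw [← smul_add]
  norm_num at h ⊢
  linarith

lemma convexOn_linearized {n : ℕ} {p : EuclideanSpace ℝ (Fin n) → ℝ}
    (hp : ConvexOn ℝ Set.univ p) (c : ℝ) (s z : EuclideanSpace ℝ (Fin n)) :
    ConvexOn ℝ Set.univ (fun u => p u - c - ⟪s, u - z⟫) := by
  have h := (hp.sub ((innerSL ℝ s).toLinearMap.concaveOn convex_univ)).add_const (⟪s, z⟫ - c)
  refine h.congr fun u _ => ?_
  simp only [Pi.add_apply, Pi.sub_apply, inner_sub_right, ContinuousLinearMap.coe_coe,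
    innerSL_apply_apply]
  ring

/-- A point minimizing `φ + (β/2)‖· - z‖²` at its own proximal centre `z` minimizes the convex
function `φ`, because the proximal term is of second order there. -/
lemma min_of_prox_min {n : ℕ} {C : Set (EuclideanSpace ℝ (Fin n))}
    {φ : EuclideanSpace ℝ (Fin n) → ℝ} (hφ : ConvexOn ℝ C φ) {z : EuclideanSpace ℝ (Fin n)}
    (hz : z ∈ C) {β : ℝ} (hmin : ∀ u ∈ C, φ z ≤ φ u + β / 2 * ‖u - z‖ ^ 2)
    {u : EuclideanSpace ℝ (Fin n)} (hu : u ∈ C) : φ z ≤ φ u := by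
  have key : ∀ t : ℝ, 0 < t → t ≤ 1 → φ z ≤ φ u + t * (β / 2 * ‖u - z‖ ^ 2) := by
    intro t ht ht1
    have h0 := hmin _ (hφ.1 hz hu (sub_nonneg.2 ht1) ht.le (by ring))
    have h1 := hφ.2 hz hu (sub_nonneg.2 ht1) ht.le (by ring)
    have h2 : (1 - t) • z + t • u - z = t • (u - z) := by module
    rw [h2, norm_smul, mul_pow, Real.norm_eq_abs, sq_abs] at h0
    simp only [smul_eq_mul] at h1
    refine le_of_mul_le_mul_left ?_ ht
    nlinarith
  have ht : Tendsto (fun t : ℝ => φ u + t * (β / 2 * ‖u - z‖ ^ 2)) (nhdsWithin 0 (Set.Ioi 0))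
      (nhds (φ u + 0 * (β / 2 * ‖u - z‖ ^ 2))) :=
    ((by fun_prop : Continuous fun t : ℝ => φ u + t * (β / 2 * ‖u - z‖ ^ 2)).tendsto 0).mono_left
      nhdsWithin_le_nhds
  rw [zero_mul, add_zero] at ht
  refine ge_of_tendsto ht ?_
  filter_upwards [Ioc_mem_nhdsGT (zero_lt_one' ℝ)] with t h using key t h.1 h.2

/-- Slater's condition from strict decrease of the active constraints: a short step from the
feasible point `z` towards `y` makes the active constraints negative by convexity and keeps the
inactive ones negative by continuity. -/
lemma exists_slater {n K : ℕ} {X : Set (EuclideanSpace ℝ (Fin n))} (hX : Convex ℝ X)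
    {c : Fin K → EuclideanSpace ℝ (Fin n) → ℝ} (hc : ∀ i, ConvexOn ℝ Set.univ (c i))
    {z y : EuclideanSpace ℝ (Fin n)} (hz : z ∈ X) (hy : y ∈ X) (hcz : ∀ i, c i z ≤ 0)
    (hcy : ∀ i, c i z = 0 → c i y < 0) : ∃ y' ∈ X, ∀ i, c i y' < 0 := by
  have hev : ∀ i, ∀ᶠ t : ℝ in nhdsWithin 0 (Set.Ioi 0), c i ((1 - t) • z + t • y) < 0 := by
    intro i
    rcases (hcz i).eq_or_lt with h0 | hneg
    · filter_upwards [Ioc_mem_nhdsGT (zero_lt_one' ℝ)] with t ht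
      have h1 := (hc i).2 (Set.mem_univ z) (Set.mem_univ y) (sub_nonneg.2 ht.2) ht.1.le (by ring)
      have h2 := mul_neg_of_pos_of_neg ht.1 (hcy i h0)
      simp only [smul_eq_mul, h0, mul_zero, zero_add] at h1
      linarith
    · have hci : Continuous (c i) := (hc i).locallyLipschitz.continuous
      have hct : Continuous fun t : ℝ => c i ((1 - t) • z + t • y) := by fun_prop
      have := (hct.tendsto 0).mono_left (nhdsWithin_le_nhds (s := Set.Ioi 0))
      refine this.eventually_lt_const ?_
      simpa using hneg
  obtain ⟨t, ht, ht'⟩ :=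
    ((eventually_all.2 hev).and (Ioc_mem_nhdsGT (zero_lt_one' ℝ))).exists
  exact ⟨_, hX hz hy (sub_nonneg.2 ht'.2) ht'.1.le (by ring), ht⟩

/-- KKT conditions at a minimizer `z` of the convex program whose objective and constraints are `g`
and `G i` tilted by linear forms, with Slater point `y`. The tilts `sh`, `sH i` appear in the
conclusion as the subgradients of the subtracted functions. -/
lemma exists_kkt {n K : ℕ} {X : Set (EuclideanSpace ℝ (Fin n))} (hX : Convex ℝ X)
    {g : EuclideanSpace ℝ (Fin n) → ℝ} {G : Fin K → EuclideanSpace ℝ (Fin n) → ℝ}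
    (hg : ConvexOn ℝ Set.univ g) (hG : ∀ i, ConvexOn ℝ Set.univ (G i))
    {z sh : EuclideanSpace ℝ (Fin n)} {sH : Fin K → EuclideanSpace ℝ (Fin n)} {d : Fin K → ℝ}
    (hz : z ∈ X) (hGz : ∀ i, G i z ≤ d i)
    (hmin : ∀ u ∈ X, (∀ i, G i u - d i - ⟪sH i, u - z⟫ ≤ 0) → g z ≤ g u - ⟪sh, u - z⟫)
    {y : EuclideanSpace ℝ (Fin n)} (hy : y ∈ X) (hcy : ∀ i, G i y - d i - ⟪sH i, y - z⟫ < 0) :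
    ∃ lam : Fin K → ℝ, (∀ i, 0 ≤ lam i) ∧ (∀ i, lam i * (G i z - d i) = 0) ∧
      ∃ sg ∈ subdiff g z, ∃ sG : Fin K → EuclideanSpace ℝ (Fin n), (∀ i, sG i ∈ subdiff (G i) z) ∧
      ∃ v ∈ normalCone X z, sg - sh + (∑ i, lam i • (sG i - sH i)) + v = 0 := by
  have hφ : ConvexOn ℝ X (fun u => g u - 0 - ⟪sh, u - z⟫) :=
    (convexOn_linearized hg 0 sh z).subset (Set.subset_univ _) hX
  obtain ⟨lam, hlam, hcs, hL⟩ := exists_lagrange_multipliers hφ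
    (fun i => (convexOn_linearized (hG i) (d i) (sH i) z).subset (Set.subset_univ _) hX) hz
    (by simpa using hGz) (by simpa using hmin) hy hcy
  simp only [sub_self, inner_zero_right, sub_zero] at hcs hL
  -- Index `none` carries the objective with weight one, `some i` the `i`-th constraint.
  obtain ⟨s, hs, hs'⟩ := exists_subgradient_sum hX (ι := Option (Fin K))
    (c := fun o => o.elim g G) (z := z) (lam := fun o => o.elim 1 lam)
    (by rintro (_ | i); exacts [hg, hG i]) hz
    (by rintro (_ | i); exacts [zero_le_one, hlam i]) Finset.univ
    (-sh - ∑ i, lam i • sH i) (by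
      intro u hu
      have h1 := hL u hu
      have h2 : ∑ i, lam i * (G i u - d i - ⟪sH i, u - z⟫) =
          ∑ i, lam i * G i u - ∑ i, lam i * G i z - ∑ i, lam i * ⟪sH i, u - z⟫ := by
        rw [← Finset.sum_sub_distrib, ← Finset.sum_sub_distrib]
        refine Finset.sum_congr rfl fun i _ => ?_
        linear_combination hcs i
      rw [h2] at h1
      simp only [Fintype.sum_option, Option.elim, inner_sub_left, inner_neg_left, sum_inner,
        real_inner_smul_left, inner_sub_right, mul_sub, Finset.sum_sub_distrib] at h1 ⊢
      linarith)
  refine ⟨lam, hlam, hcs, s none, hs none, fun i => s (some i), fun i => hs (some i),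
    -(-sh - ∑ i, lam i • sH i + ∑ o, Option.elim o 1 lam • s o), fun u hu => ?_, ?_⟩
  · have := hs' u hu
    rw [inner_neg_left]
    linarith
  · simp only [Fintype.sum_option, Option.elim, smul_sub, Finset.sum_sub_distrib, one_smul]
    abel

/-- A lower bound for a continuous `F` on the strictly feasible points extends to all feasible
points, since segments towards a Slater point are strictly feasible. -/
lemma le_of_le_strict {n K : ℕ} {X : Set (EuclideanSpace ℝ (Fin n))} (hX : Convex ℝ X)
    {c : Fin K → EuclideanSpace ℝ (Fin n) → ℝ} (hc : ∀ i, ConvexOn ℝ Set.univ (c i))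
    {F : EuclideanSpace ℝ (Fin n) → ℝ} (hF : Continuous F) {m : ℝ}
    (hm : ∀ u ∈ X, (∀ i, c i u < 0) → m ≤ F u)
    {y : EuclideanSpace ℝ (Fin n)} (hy : y ∈ X) (hcy : ∀ i, c i y < 0)
    {u : EuclideanSpace ℝ (Fin n)} (hu : u ∈ X) (hcu : ∀ i, c i u ≤ 0) : m ≤ F u := by
  have hct : Continuous fun t : ℝ => F ((1 - t) • u + t • y) := by fun_prop
  have ht := (hct.tendsto 0).mono_left (nhdsWithin_le_nhds (s := Set.Ioi 0))
  simp only [sub_zero, one_smul, zero_smul, add_zero] at ht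
  refine ge_of_tendsto ht ?_
  filter_upwards [Ioc_mem_nhdsGT (zero_lt_one' ℝ)] with t ht
  refine hm _ (hX hu hy (sub_nonneg.2 ht.2) ht.1.le (by ring)) fun i => ?_
  have h1 := (hc i).2 (Set.mem_univ u) (Set.mem_univ y) (sub_nonneg.2 ht.2) ht.1.le (by ring)
  have h2 := mul_neg_of_pos_of_neg ht.1 (hcy i)
  have h3 := mul_nonpos_of_nonneg_of_nonpos (sub_nonneg.2 ht.2) (hcu i)
  simp only [smul_eq_mul] at h1
  linarith

/-- One step of the method decreases `g - h` by at least a fixed multiple of the squared step length.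
The minimizer `x'` is compared with the midpoint of `x` and `x'`, which is feasible because `x` is. -/
lemma sufficient_decrease {n K : ℕ} {X : Set (EuclideanSpace ℝ (Fin n))} (hX : Convex ℝ X)
    {g h : EuclideanSpace ℝ (Fin n) → ℝ} {c : Fin K → EuclideanSpace ℝ (Fin n) → ℝ}
    (hc : ∀ i, ConvexOn ℝ Set.univ (c i)) {ρ β : ℝ}
    (hg : ConvexOn ℝ Set.univ (fun y => g y - ρ / 2 * ‖y‖ ^ 2))
    {x x' sh : EuclideanSpace ℝ (Fin n)} (hsh : sh ∈ subdiff h x)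
    (hx : x ∈ X) (hcx : ∀ i, c i x ≤ 0) (hx' : x' ∈ X) (hcx' : ∀ i, c i x' ≤ 0)
    (hmin : ∀ u ∈ X, (∀ i, c i u ≤ 0) →
      g x' - ⟪sh, x' - x⟫ + β / 2 * ‖x' - x‖ ^ 2 ≤ g u - ⟪sh, u - x⟫ + β / 2 * ‖u - x‖ ^ 2) :
    (ρ + β) / 4 * ‖x' - x‖ ^ 2 + β / 2 * ‖x' - x‖ ^ 2 ≤ (g x - h x) - (g x' - h x') := by
  have h2 : (0 : ℝ) ≤ 1 / 2 := by norm_num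
  have h1 := hmin ((1 / 2 : ℝ) • x' + (1 / 2 : ℝ) • x)
    (hX hx' hx h2 h2 (by norm_num)) (fun i => by
      have := (hc i).2 (Set.mem_univ x') (Set.mem_univ x) h2 h2 (by norm_num)
      have := hcx i
      have := hcx' i
      simp only [smul_eq_mul] at *
      linarith)
  have h3 : (1 / 2 : ℝ) • x' + (1 / 2 : ℝ) • x - x = (1 / 2 : ℝ) • (x' - x) := by module
  have h4 := midpoint_strong hg x' x
  rw [h3, real_inner_smul_right, norm_smul, mul_pow] at h1
  have h5 := hsh x'
  norm_num at h1 h4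
  linarith

/-! ### Convergence of the proximal DC iterates -/

/-- subsequential convergence of the proximal DC algorithm with multiple DC
constraints: under the generalized MFCQ and bounded level set assumptions, every accumulation
point of the proximal DC iterates for
`min{g - h : x ∈ X, G_i - H_i ≤ 0, i = 1,…,K}` is a KKT point. -/
theorem stmt15 (n K : ℕ) (ιE ιI : Type) [Fintype ιE] [Fintype ιI]
    (a : ιE → EuclideanSpace ℝ (Fin n)) (b : ιE → ℝ)
    (ω : ιI → EuclideanSpace ℝ (Fin n) → ℝ)
    (hω_conv : ∀ i, ConvexOn ℝ Set.univ (ω i)) (hω_smooth : ∀ i, ContDiff ℝ 1 (ω i))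
    (X : Set (EuclideanSpace ℝ (Fin n)))
    (hX : X = {x | (∀ i, ⟪a i, x⟫ + b i = 0) ∧ ∀ i, ω i x ≤ 0}) (hXne : X.Nonempty)
    (g h : EuclideanSpace ℝ (Fin n) → ℝ)
    (G H : Fin K → EuclideanSpace ℝ (Fin n) → ℝ)
    (hg : ConvexOn ℝ Set.univ g) (hh : ConvexOn ℝ Set.univ h)
    (hG : ∀ i, ConvexOn ℝ Set.univ (G i)) (hH : ∀ i, ConvexOn ℝ Set.univ (H i))
    (ρ β : ℝ) (hρ : 0 ≤ ρ) (hβ : 0 ≤ β) (hρβ : 0 < ρ + β)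
    (hgstrong : ConvexOn ℝ Set.univ (fun y => g y - ρ / 2 * ‖y‖ ^ 2))
    (hMFCQ : ∀ x ∈ X, (∀ i, G i x ≤ H i x) → ∃ y ∈ X,
      (∀ i, ω i x = 0 → ⟪gradient (ω i) x, y - x⟫ < 0) ∧
      (∀ i, G i x = H i x → ∀ sHi ∈ subdiff (H i) x, G i y - H i x - ⟪sHi, y - x⟫ < 0))
    (x : ℕ → EuclideanSpace ℝ (Fin n)) (hx0X : x 0 ∈ X)
    (hx0feas : ∀ i, G i (x 0) ≤ H i (x 0))
    (hlevel : Bornology.IsBounded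
      {y | y ∈ X ∧ (∀ i, G i y ≤ H i y) ∧ g y - h y ≤ g (x 0) - h (x 0)})
    (hiter : ∀ k, ∃ sh ∈ subdiff h (x k),
      ∃ sH : Fin K → EuclideanSpace ℝ (Fin n), (∀ i, sH i ∈ subdiff (H i) (x k)) ∧
      (x (k + 1) ∈ X ∧ ∀ i, G i (x (k + 1)) - H i (x k) - ⟪sH i, x (k + 1) - x k⟫ ≤ 0) ∧
      ∀ u ∈ X, (∀ i, G i u - H i (x k) - ⟪sH i, u - x k⟫ ≤ 0) →
        g (x (k + 1)) - ⟪sh, x (k + 1) - x k⟫ + β / 2 * ‖x (k + 1) - x k‖ ^ 2 ≤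
          g u - ⟪sh, u - x k⟫ + β / 2 * ‖u - x k‖ ^ 2)
    (xstar : EuclideanSpace ℝ (Fin n)) (ks : ℕ → ℕ) (hks : StrictMono ks)
    (hconv : Tendsto (fun i => x (ks i)) atTop (nhds xstar)) :
    xstar ∈ X ∧ (∀ i, G i xstar ≤ H i xstar) ∧
    ∃ lam : Fin K → ℝ, (∀ i, 0 ≤ lam i) ∧ (∀ i, lam i * (G i xstar - H i xstar) = 0) ∧
      ∃ sg ∈ subdiff g xstar, ∃ sh ∈ subdiff h xstar,
      ∃ sG : Fin K → EuclideanSpace ℝ (Fin n), (∀ i, sG i ∈ subdiff (G i) xstar) ∧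
      ∃ sH : Fin K → EuclideanSpace ℝ (Fin n), (∀ i, sH i ∈ subdiff (H i) xstar) ∧
      ∃ v ∈ normalCone X xstar,
        sg - sh + (∑ i, lam i • (sG i - sH i)) + v = 0 := by
  have hωc : ∀ i, Continuous (ω i) := fun i => (hω_smooth i).continuous
  have hgc : Continuous g := hg.locallyLipschitz.continuous
  have hhc : Continuous h := hh.locallyLipschitz.continuous
  have hGc : ∀ i, Continuous (G i) := fun i => (hG i).locallyLipschitz.continuous
  have hHc : ∀ i, Continuous (H i) := fun i => (hH i).locallyLipschitz.continuous
  have hXeq : X = (⋂ i, {u | ⟪a i, u⟫ + b i = 0}) ∩ ⋂ i, {u | ω i u ≤ 0} := by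
    rw [hX]; ext; simp
  have hXcl : IsClosed X := by
    rw [hXeq]
    exact (isClosed_iInter fun i => isClosed_eq (by fun_prop) (by fun_prop)).inter
      (isClosed_iInter fun i => isClosed_le (hωc i) continuous_const)
  have hXcv : Convex ℝ X := by
    rw [hXeq]
    refine (convex_iInter fun i => ?_).inter (convex_iInter fun i => ?_)
    · intro u hu v hv s t _ _ hst
      simp only [Set.mem_ofPred_eq, inner_add_right, real_inner_smul_right] at hu hv ⊢
      linear_combination s * hu + t * hv - b i * hst
    · simpa using (hω_conv i).convex_le 0
  choose sh hsh sH hsH hnext hopt using hiter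
  have hxX : ∀ k, x k ∈ X := by
    rintro (_ | k)
    exacts [hx0X, (hnext k).1]
  have hxfeas : ∀ k i, G i (x k) ≤ H i (x k) := by
    rintro (_ | k) i
    · exact hx0feas i
    · have h1 := (hnext k).2 i
      have h2 := hsH k i (x (k + 1))
      linarith
  have hzX : xstar ∈ X := hXcl.mem_of_tendsto hconv (.of_forall fun i => hxX _)
  have hzfeas : ∀ i, G i xstar ≤ H i xstar := fun i =>
    le_of_tendsto_of_tendsto' (((hGc i).tendsto _).comp hconv) (((hHc i).tendsto _).comp hconv)
      fun j => hxfeas _ i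
  have hdec : ∀ k, (ρ + β) / 4 * ‖x (k + 1) - x k‖ ^ 2 ≤
      (g (x k) - h (x k)) - (g (x (k + 1)) - h (x (k + 1))) := by
    intro k
    have h1 := sufficient_decrease hXcv
      (fun i => convexOn_linearized (hG i) (H i (x k)) (sH k i) (x k)) hgstrong (hsh k) (hxX k)
      (by simpa using hxfeas k) (hnext k).1 (hnext k).2 (hopt k)
    have h2 : 0 ≤ β / 2 * ‖x (k + 1) - x k‖ ^ 2 := by positivity
    linarith
  -- The monotone values `g - h` converge because they do so along the subsequence.
  have hanti : Antitone fun k => g (x k) - h (x k) := antitone_nat_of_succ_le fun k => by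
    have h1 := hdec k
    have h2 : 0 ≤ (ρ + β) / 4 * ‖x (k + 1) - x k‖ ^ 2 := by positivity
    linarith
  have hflim : Tendsto (fun k => g (x k) - h (x k)) atTop (nhds (g xstar - h xstar)) :=
    (tendsto_iff_tendsto_subseq_of_antitone hanti hks.tendsto_atTop).2
      (((hgc.sub hhc).tendsto xstar).comp hconv)
  have hstep : Tendsto (fun k => x (k + 1) - x k) atTop (nhds 0) := by
    have h1 : Tendsto (fun k => ‖x (k + 1) - x k‖ ^ 2) atTop (nhds 0) := by
      have h2 : Tendsto (fun k => ((ρ + β) / 4)⁻¹ *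
          ((g (x k) - h (x k)) - (g (x (k + 1)) - h (x (k + 1))))) atTop (nhds 0) := by
        have := (hflim.sub (hflim.comp (tendsto_add_atTop_nat 1))).const_mul ((ρ + β) / 4)⁻¹
        simpa using this
      refine squeeze_zero (fun k => by positivity) (fun k => ?_) h2
      rw [le_inv_mul_iff₀ (by positivity)]
      exact hdec k
    rw [tendsto_zero_iff_norm_tendsto_zero]
    have := h1.sqrt
    simpa using this
  -- The subgradients along the subsequence stay bounded, so a further subsequence makes them
  -- all converge simultaneously.
  obtain ⟨R, hR⟩ : ∃ R, ∀ j, ‖x (ks j)‖ ≤ R := by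
    obtain ⟨R, hR⟩ := (Metric.isBounded_range_of_tendsto _ hconv).exists_norm_le
    exact ⟨R, fun j => hR _ ⟨j, rfl⟩⟩
  obtain ⟨M, hM0, hM⟩ := exists_bound_subdiff hh R
  choose N hN0 hN using fun i => exists_bound_subdiff (hH i) R
  obtain ⟨⟨shs, sHs⟩, -, ψ, hψ, hlim⟩ := tendsto_subseq_of_bounded
    (s := Metric.closedBall (0 : EuclideanSpace ℝ (Fin n)) M ×ˢ
      Set.pi Set.univ fun i => Metric.closedBall (0 : EuclideanSpace ℝ (Fin n)) (N i))
    (x := fun j => (sh (ks j), sH (ks j)))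
    (Metric.isBounded_closedBall.prod (Bornology.IsBounded.pi fun i => Metric.isBounded_closedBall))
    (fun j => ⟨by simpa using hM _ (hR j) _ (hsh _),
      fun i _ => by simpa using hN i _ (hR j) _ (hsH _ i)⟩)
  have hθ : Tendsto (fun j => ks (ψ j)) atTop atTop := (hks.comp hψ).tendsto_atTop
  have hxθ : Tendsto (fun j => x (ks (ψ j))) atTop (nhds xstar) := hconv.comp hψ.tendsto_atTop
  have hxθ' : Tendsto (fun j => x (ks (ψ j) + 1)) atTop (nhds xstar) := by
    simpa using (hstep.comp hθ).add hxθ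
  have hshθ : Tendsto (fun j => sh (ks (ψ j))) atTop (nhds shs) :=
    (continuous_fst.tendsto _).comp hlim
  have hsHθ : ∀ i, Tendsto (fun j => sH (ks (ψ j)) i) atTop (nhds (sHs i)) := fun i =>
    ((continuous_apply i).tendsto _).comp ((continuous_snd.tendsto _).comp hlim)
  have hshs : shs ∈ subdiff h xstar := mem_subdiff_of_tendsto hhc hxθ hshθ fun j => hsh _
  have hsHs : ∀ i, sHs i ∈ subdiff (H i) xstar := fun i =>
    mem_subdiff_of_tendsto (hHc i) hxθ (hsHθ i) fun j => hsH _ i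
  have hcc : ∀ i, ConvexOn ℝ Set.univ (fun u => G i u - H i xstar - ⟪sHs i, u - xstar⟫) :=
    fun i => convexOn_linearized (hG i) _ _ _
  obtain ⟨y, hyX, hcy⟩ : ∃ y ∈ X, ∀ i, G i y - H i xstar - ⟪sHs i, y - xstar⟫ < 0 := by
    obtain ⟨y, hyX, -, hy⟩ := hMFCQ xstar hzX hzfeas
    refine exists_slater hXcv hcc hzX hyX (by simpa using hzfeas) fun i hi => ?_
    exact hy i (by simpa [sub_eq_zero] using hi) _ (hsHs i)
  -- A strictly feasible point of the limiting subproblem is feasible for late subproblems.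
  have hstrict : ∀ u ∈ X, (∀ i, G i u - H i xstar - ⟪sHs i, u - xstar⟫ < 0) →
      g xstar ≤ g u - ⟪shs, u - xstar⟫ + β / 2 * ‖u - xstar‖ ^ 2 := by
    intro u hu hcu
    have hev : ∀ᶠ j in atTop, ∀ i,
        G i u - H i (x (ks (ψ j))) - ⟪sH (ks (ψ j)) i, u - x (ks (ψ j))⟫ < 0 := by
      refine eventually_all.2 fun i => ?_
      have : Tendsto (fun j => G i u - H i (x (ks (ψ j))) -
          ⟪sH (ks (ψ j)) i, u - x (ks (ψ j))⟫) atTop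
          (nhds (G i u - H i xstar - ⟪sHs i, u - xstar⟫)) :=
        (tendsto_const_nhds.sub (((hHc i).tendsto _).comp hxθ)).sub
          ((hsHθ i).inner (tendsto_const_nhds.sub hxθ))
      exact this.eventually_lt_const (hcu i)
    have hl : Tendsto (fun j => g (x (ks (ψ j) + 1)) -
        ⟪sh (ks (ψ j)), x (ks (ψ j) + 1) - x (ks (ψ j))⟫ +
        β / 2 * ‖x (ks (ψ j) + 1) - x (ks (ψ j))‖ ^ 2) atTop
        (nhds (g xstar - ⟪shs, xstar - xstar⟫ + β / 2 * ‖xstar - xstar‖ ^ 2)) :=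
      (((hgc.tendsto _).comp hxθ').sub (hshθ.inner (hxθ'.sub hxθ))).add
        (((hxθ'.sub hxθ).norm.pow 2).const_mul _)
    have hr : Tendsto (fun j => g u - ⟪sh (ks (ψ j)), u - x (ks (ψ j))⟫ +
        β / 2 * ‖u - x (ks (ψ j))‖ ^ 2) atTop
        (nhds (g u - ⟪shs, u - xstar⟫ + β / 2 * ‖u - xstar‖ ^ 2)) :=
      (tendsto_const_nhds.sub (hshθ.inner (tendsto_const_nhds.sub hxθ))).add
        (((tendsto_const_nhds.sub hxθ).norm.pow 2).const_mul _)
    have := le_of_tendsto_of_tendsto hl hr (by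
      filter_upwards [hev] with j hj using hopt _ u hu fun i => (hj i).le)
    simpa using this
  have hprox : ∀ u ∈ X, (∀ i, G i u - H i xstar - ⟪sHs i, u - xstar⟫ ≤ 0) →
      g xstar ≤ g u - ⟪shs, u - xstar⟫ + β / 2 * ‖u - xstar‖ ^ 2 := fun u hu hcu =>
    le_of_le_strict hXcv hcc (by fun_prop) hstrict hyX hcy hu hcu
  have hCcv : Convex ℝ (X ∩ ⋂ i, {u | G i u - H i xstar - ⟪sHs i, u - xstar⟫ ≤ 0}) :=
    hXcv.inter (convex_iInter fun i => by simpa using (hcc i).convex_le 0)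
  have hmin : ∀ u ∈ X, (∀ i, G i u - H i xstar - ⟪sHs i, u - xstar⟫ ≤ 0) →
      g xstar ≤ g u - ⟪shs, u - xstar⟫ := by
    intro u hu hcu
    have := min_of_prox_min
      ((convexOn_linearized hg 0 shs xstar).subset (Set.subset_univ _) hCcv) (z := xstar) (β := β)
      ⟨hzX, by simpa using hzfeas⟩
      (fun v hv => by simpa using hprox v hv.1 (by simpa using hv.2)) (u := u)
      ⟨hu, by simpa using hcu⟩
    simpa using this
  obtain ⟨lam, hlam, hcs, sg, hsg, sG, hsG, v, hv, hsum⟩ :=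
    exists_kkt hXcv hg hG hzX hzfeas hmin hyX hcy
  exact ⟨hzX, hzfeas, lam, hlam, hcs, sg, hsg, shs, hshs, sG, hsG, sHs, hsHs, v, hv, hsum⟩
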